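/- arXiv:2504.04570 — 4 statements merged into one kernel-verified Lean document; each statement's English description precedes it below -/
import Mathlib

section
/- Let M and N be Polish spaces and let h : M → N be a continuous surjection. Then the induced pushforward map on Borel probability measures is surjective: for every Borel probability measure μ on N there exists a Borel probability measure ν on M such that the pushforward measure h_#ν equals μ. -/
open MeasureTheory

/-!
Composing with a continuous surjection from the Baire space `ℕ → ℕ` onto `M`, it suffices to treat
a continuous surjection `g : (ℕ → ℕ) → N`. The images `g '' C` of cylinders `C` are only analytic,
so each is replaced by a Borel hull `hull g μ s`: a measurable hull for `μ`, cut down to the closure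
of the image. Up to a null set, the hull of a cylinder is covered by the hulls of its children
(`measure_hull_diff`). Hence the greedy choice of the smallest admissible next digit
(`nextDigit`) is Borel measurable in `y : N`, and for almost every `y` it produces a branch
`branch g μ y` with `y` in the closure of the image of every cylinder around that branch;
continuity of `g` then forces `g (branch g μ y) = y`. The pushforward of `μ` under this almost
everywhere section is the required measure.
-/

namespace PushforwardSurjective

open Set

/-- The cylinder of sequences with a prescribed finite beginning. The beginning is stored in
reverse order: the head of the list is the last digit. -/
def cyl : List ℕ → Set (ℕ → ℕ)
  | [] => univ
  | k :: s => cyl s ∩ {x | x s.length = k}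

lemma cyl_eq_iUnion (s : List ℕ) : cyl s = ⋃ k, cyl (k :: s) := by
  ext x
  simp [cyl]

variable {N : Type*} [TopologicalSpace N] [MeasurableSpace N]

/-- A Borel set containing the image of a cylinder, which is both a measurable hull for `μ` and
contained in the closure of the image. -/
noncomputable def hull (g : (ℕ → ℕ) → N) (μ : Measure N) (s : List ℕ) : Set N :=
  toMeasurable μ (g '' cyl s) ∩ closure (g '' cyl s)

lemma subset_hull (g : (ℕ → ℕ) → N) (μ : Measure N) (s : List ℕ) :
    g '' cyl s ⊆ hull g μ s :=
  subset_inter (subset_toMeasurable _ _) subset_closure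

lemma measurableSet_hull [BorelSpace N] (g : (ℕ → ℕ) → N) (μ : Measure N) (s : List ℕ) :
    MeasurableSet (hull g μ s) :=
  (measurableSet_toMeasurable _ _).inter isClosed_closure.measurableSet

lemma measure_hull_diff [BorelSpace N] (g : (ℕ → ℕ) → N) (μ : Measure N) [IsFiniteMeasure μ]
    (s : List ℕ) : μ (hull g μ s \ ⋃ k, hull g μ (k :: s)) = 0 := by
  have hm : MeasurableSet (⋃ k, hull g μ (k :: s)) :=
    MeasurableSet.iUnion fun k => measurableSet_hull g μ _
  have hsub : g '' cyl s ⊆ ⋃ k, hull g μ (k :: s) := by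
    rw [cyl_eq_iUnion, image_iUnion]
    exact iUnion_mono fun k => subset_hull g μ _
  refine measure_mono_null (sdiff_subset_sdiff_left inter_subset_left) ?_
  rw [sdiff_eq, Measure.measure_toMeasurable_inter hm.compl (measure_ne_top _ _), ← sdiff_eq,
    sdiff_eq_empty.2 hsub, measure_empty]

lemma exists_digit (g : (ℕ → ℕ) → N) (μ : Measure N) (s : List ℕ) (y : N) :
    ∃ k, y ∈ hull g μ (k :: s) ∪ (⋃ k, hull g μ (k :: s))ᶜ := by
  by_cases hy : y ∈ ⋃ k, hull g μ (k :: s)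
  · obtain ⟨k, hk⟩ := mem_iUnion.1 hy
    exact ⟨k, Or.inl hk⟩
  · exact ⟨0, Or.inr hy⟩

open Classical in
/-- The least digit `k` such that `y` lies in the hull of the child `k :: s`, and `0` if `y` lies in
the hull of no child. -/
noncomputable def nextDigit (g : (ℕ → ℕ) → N) (μ : Measure N) (s : List ℕ) (y : N) : ℕ :=
  Nat.find (exists_digit g μ s y)

lemma mem_hull_nextDigit (g : (ℕ → ℕ) → N) (μ : Measure N) (s : List ℕ) (y : N)
    (hy : y ∈ ⋃ k, hull g μ (k :: s)) : y ∈ hull g μ (nextDigit g μ s y :: s) := by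
  classical
  exact (Nat.find_spec (exists_digit g μ s y)).resolve_right fun h => h hy

lemma measurable_nextDigit [BorelSpace N] (g : (ℕ → ℕ) → N) (μ : Measure N) (s : List ℕ) :
    Measurable (nextDigit g μ s) := by
  classical
  exact measurable_find (exists_digit g μ s) fun k => (measurableSet_hull g μ _).union
    (MeasurableSet.iUnion fun k => measurableSet_hull g μ _).compl

/-- The first `n` greedy digits of `y`, in reverse order. -/
noncomputable def digits (g : (ℕ → ℕ) → N) (μ : Measure N) : ℕ → N → List ℕ
  | 0, _ => []
  | n + 1, y => nextDigit g μ (digits g μ n y) y :: digits g μ n y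

/-- The infinite sequence of greedy digits of `y`. -/
noncomputable def branch (g : (ℕ → ℕ) → N) (μ : Measure N) (y : N) : ℕ → ℕ :=
  fun n => nextDigit g μ (digits g μ n y) y

lemma measurableSet_digits_eq [BorelSpace N] (g : (ℕ → ℕ) → N) (μ : Measure N) (n : ℕ)
    (s : List ℕ) : MeasurableSet {y | digits g μ n y = s} := by
  induction n generalizing s with
  | zero => simp [digits]
  | succ n ih =>
    cases s with
    | nil => simp [digits]
    | cons k s =>
      have : {y | digits g μ (n + 1) y = k :: s} =
          nextDigit g μ s ⁻¹' {k} ∩ {y | digits g μ n y = s} := by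
        ext y
        simp only [digits, List.cons.injEq, mem_ofPred_eq, mem_inter_iff, mem_preimage,
          mem_singleton_iff]
        constructor <;> rintro ⟨h1, h2⟩ <;> subst h2 <;> exact ⟨h1, rfl⟩
      rw [this]
      exact (measurable_nextDigit g μ s (measurableSet_singleton k)).inter (ih s)

lemma measurable_branch [BorelSpace N] (g : (ℕ → ℕ) → N) (μ : Measure N) :
    Measurable (branch g μ) := by
  refine measurable_pi_iff.2 fun n => measurable_to_countable' fun k => ?_
  have : (fun y => branch g μ y n) ⁻¹' {k} =
      ⋃ s, {y | digits g μ (n + 1) y = k :: s} := by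
    ext y
    simp [branch, digits]
  rw [this]
  exact MeasurableSet.iUnion fun s => measurableSet_digits_eq g μ _ _

lemma length_digits (g : (ℕ → ℕ) → N) (μ : Measure N) (n : ℕ) (y : N) :
    (digits g μ n y).length = n := by
  induction n with
  | zero => rfl
  | succ n ih => simp [digits, ih]

lemma cyl_digits (g : (ℕ → ℕ) → N) (μ : Measure N) (n : ℕ) (y : N) :
    cyl (digits g μ n y) = PiNat.cylinder (branch g μ y) n := by
  induction n with
  | zero => simp [digits, cyl]
  | succ n ih =>
    ext x
    simp only [digits, cyl, ih, length_digits, mem_inter_iff, PiNat.mem_cylinder_iff,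
      mem_ofPred_eq, Nat.lt_succ_iff_lt_or_eq, or_imp, forall_and, forall_eq]
    rfl

/-- A continuous map on the Baire space is determined at `x` by the closures of the images of the
cylinders around `x`. -/
lemma eq_of_forall_mem_closure {N : Type*} [TopologicalSpace N] [T3Space N]
    {g : (ℕ → ℕ) → N} (hg : Continuous g) {x : ℕ → ℕ}
    {y : N} (hy : ∀ n, y ∈ closure (g '' PiNat.cylinder x n)) : g x = y := by
  by_contra hne
  obtain ⟨V, hV, hVc, hVsub⟩ := exists_mem_nhds_isClosed_subset
    (isOpen_compl_singleton.mem_nhds (show g x ∈ ({y} : Set N)ᶜ from hne))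
  obtain ⟨_, ⟨z, n, rfl⟩, hxz, hsub⟩ :=
    (PiNat.isTopologicalBasis_cylinders (fun _ : ℕ => ℕ)).mem_nhds_iff.1
      (hg.continuousAt.preimage_mem_nhds hV)
  rw [← PiNat.mem_cylinder_iff_eq.1 hxz] at hsub
  exact hVsub (closure_minimal (image_subset_iff.2 hsub) hVc (hy n)) rfl

lemma ae_section [T3Space N] [BorelSpace N] {g : (ℕ → ℕ) → N} (hg : Continuous g)
    (hsurj : Function.Surjective g) (μ : Measure N) [IsFiniteMeasure μ] :
    ∀ᵐ y ∂μ, g (branch g μ y) = y := by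
  have hae : ∀ᵐ y ∂μ, ∀ s, y ∉ hull g μ s \ ⋃ k, hull g μ (k :: s) :=
    ae_all_iff.2 fun s => measure_eq_zero_iff_ae_notMem.1 (measure_hull_diff g μ s)
  filter_upwards [hae] with y hy
  have hmem : ∀ n, y ∈ hull g μ (digits g μ n y) := by
    intro n
    induction n with
    | zero =>
      obtain ⟨x, rfl⟩ := hsurj y
      exact subset_hull g μ _ (mem_image_of_mem g (mem_univ x))
    | succ n ih =>
      exact mem_hull_nextDigit g μ _ y (by_contra fun h => hy _ ⟨ih, h⟩)
  exact eq_of_forall_mem_closure hg fun n => cyl_digits g μ n y ▸ (hmem n).2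

end PushforwardSurjective

/-- for a continuous surjection `h` between Polish spaces, the induced
pushforward map on Borel probability measures is surjective. -/
theorem pushforward_surjective_of_continuous_surjective
    {M N : Type*} [TopologicalSpace M] [PolishSpace M]
    [MeasurableSpace M] [BorelSpace M]
    [TopologicalSpace N] [PolishSpace N]
    [MeasurableSpace N] [BorelSpace N]
    (h : M → N) (hcont : Continuous h) (hsurj : Function.Surjective h)
    (μ : Measure N) [IsProbabilityMeasure μ] :
    ∃ ν : Measure M, IsProbabilityMeasure ν ∧ Measure.map h ν = μ := by
  have : Nonempty N := nonempty_of_isProbabilityMeasure μ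
  have : Nonempty M := hsurj.nonempty
  obtain ⟨f, hf, hfs⟩ := PolishSpace.exists_nat_nat_continuous_surjective M
  have hm : Measurable (f ∘ PushforwardSurjective.branch (h ∘ f) μ) :=
    hf.measurable.comp (PushforwardSurjective.measurable_branch _ μ)
  refine ⟨μ.map (f ∘ PushforwardSurjective.branch (h ∘ f) μ),
    Measure.isProbabilityMeasure_map hm.aemeasurable, ?_⟩
  rw [Measure.map_map hcont.measurable hm]
  have hae := PushforwardSurjective.ae_section (hcont.comp hf) (hsurj.comp hfs) μ
  exact (Measure.map_congr hae).trans Measure.map_id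
end

section
/- Let L ≥ 0, B ≥ 0 and T > 0, and let a : ℝ → ℕ → ℝ be such that for every k ∈ ℕ the function t ↦ a(t, k) is differentiable on [0, T], satisfies |a(t, k)| ≤ B for all t ∈ [0, T] and all k, and its derivative satisfies |(d/dt) a(t, k)| ≤ L · Σ_{j=0}^∞ 2^{−j} |a(t, j)| for all t ∈ [0, T] and all k. Then for every t ∈ [0, T], Σ_{k=0}^∞ 2^{−k} |a(t, k)| ≤ e^{2Lt} · Σ_{k=0}^∞ 2^{−k} |a(0, k)|. -/
/-!
Write `S t = ∑ 2⁻ᵏ |a t k|`. By the uniform bound `B` the series converges uniformly on `[0, T]`,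
so `S` is continuous there. Termwise differentiation is not needed: if `2 L S < r` on `[x, z]`,
then the mean value inequality gives `|a z k - a x k| ≤ (r / 2) (z - x)` for all `k`, and summing
against the weights (of total mass `2`) gives `S z - S x ≤ r (z - x)`. Hence the upper right Dini
derivative of `S` is at most `2 L S`, and the Dini derivative form of Grönwall's inequality
applies.
-/

open MeasureTheory

lemma summable_weighted_abs_of_bounded {B : ℝ} {u : ℕ → ℝ} (hu : ∀ k, |u k| ≤ B) :
    Summable fun k => (2 : ℝ)⁻¹ ^ k * |u k| := by
  refine Summable.of_nonneg_of_le (fun k => by positivity) (fun k => ?_)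
    ((summable_geometric_of_lt_one (r := (2 : ℝ)⁻¹) (by norm_num) (by norm_num)).mul_right B)
  exact mul_le_mul_of_nonneg_left (hu k) (by positivity)

/-- The factor `2` is the total mass of the weights `2⁻ᵏ`. -/
lemma weighted_tsum_le_add_of_abs_sub_le {B c : ℝ} {u v : ℕ → ℝ} (hu : ∀ k, |u k| ≤ B)
    (hv : ∀ k, |v k| ≤ B) (huv : ∀ k, |v k - u k| ≤ c) :
    ∑' k : ℕ, (2 : ℝ)⁻¹ ^ k * |v k| ≤ (∑' k : ℕ, (2 : ℝ)⁻¹ ^ k * |u k|) + 2 * c := by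
  have hg : Summable fun k : ℕ => (2 : ℝ)⁻¹ ^ k * c :=
    (summable_geometric_of_lt_one (r := (2 : ℝ)⁻¹) (by norm_num) (by norm_num)).mul_right c
  have hs : ∑' k : ℕ, (2 : ℝ)⁻¹ ^ k * c = 2 * c := by
    rw [tsum_mul_right, tsum_geometric_of_lt_one (by norm_num) (by norm_num)]
    norm_num
  rw [← hs, ← (summable_weighted_abs_of_bounded hu).tsum_add hg]
  refine (summable_weighted_abs_of_bounded hv).tsum_le_tsum (fun k => ?_)
    ((summable_weighted_abs_of_bounded hu).add hg)
  rw [← mul_add]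
  refine mul_le_mul_of_nonneg_left ?_ (by positivity)
  linarith [abs_sub_abs_le_abs_sub (v k) (u k), huv k]

/-- Grönwall-type estimate for the weighted series
`Σ_k 2^{-k} |a(t,k)|` under a componentwise derivative bound. -/
theorem gronwall_weighted_series_estimate
    (L B T : ℝ) (hL : 0 ≤ L) (hB : 0 ≤ B) (hT : 0 < T)
    (a a' : ℝ → ℕ → ℝ)
    (hderiv : ∀ k : ℕ, ∀ t ∈ Set.Icc (0 : ℝ) T, HasDerivAt (fun s => a s k) (a' t k) t)
    (hbdd : ∀ t ∈ Set.Icc (0 : ℝ) T, ∀ k : ℕ, |a t k| ≤ B)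
    (hderivbdd : ∀ t ∈ Set.Icc (0 : ℝ) T, ∀ k : ℕ,
      |a' t k| ≤ L * ∑' j : ℕ, (2 : ℝ)⁻¹ ^ j * |a t j|) :
    ∀ t ∈ Set.Icc (0 : ℝ) T,
      ∑' k : ℕ, (2 : ℝ)⁻¹ ^ k * |a t k| ≤
        Real.exp (2 * L * t) * ∑' k : ℕ, (2 : ℝ)⁻¹ ^ k * |a 0 k| := by
  set S : ℝ → ℝ := fun t => ∑' k : ℕ, (2 : ℝ)⁻¹ ^ k * |a t k| with hS
  have hcont : ContinuousOn S (Set.Icc 0 T) := by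
    refine continuousOn_tsum (u := fun k => (2 : ℝ)⁻¹ ^ k * B) (fun k t ht => ?_)
      ((summable_geometric_of_lt_one (r := (2 : ℝ)⁻¹) (by norm_num) (by norm_num)).mul_right B)
      (fun k t ht => ?_)
    · exact ((hderiv k t ht).continuousAt.abs.const_mul _).continuousWithinAt
    · rw [Real.norm_of_nonneg (by positivity)]
      exact mul_le_mul_of_nonneg_left (hbdd t ht k) (by positivity)
  have key := le_gronwallBound_of_liminf_deriv_right_le (f := S) (f' := fun x => 2 * L * S x)
    (δ := S 0) (K := 2 * L) (ε := 0) hcont ?_ le_rfl (fun x _ => by simp)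
  · intro t ht
    have h := key t ht
    rwa [gronwallBound_ε0, sub_zero, mul_comm] at h
  · intro x hx r hr
    obtain ⟨r', hr', hr'r⟩ := exists_between hr
    have hxI : x ∈ Set.Icc 0 T := ⟨hx.1, hx.2.le⟩
    have hc : ContinuousWithinAt (fun y => 2 * L * S y) (Set.Ici x) x := by
      refine ContinuousWithinAt.mono_of_mem_nhdsWithin
        ((hcont x hxI).const_mul (2 * L) : ContinuousWithinAt _ (Set.Icc 0 T) x) ?_
      exact Filter.mem_of_superset (Icc_mem_nhdsGE hx.2) (Set.Icc_subset_Icc_left hx.1)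
    have hev := hc.eventually_lt_const hr'
    obtain ⟨u, hu, hsub⟩ :=
      mem_nhdsGE_iff_exists_Ico_subset.1 (Filter.inter_mem hev (Ico_mem_nhdsGE hx.2))
    refine Filter.Eventually.frequently ?_
    filter_upwards [Ioo_mem_nhdsGT hu] with z hz
    have hI : ∀ y ∈ Set.Icc x z, y ∈ Set.Icc 0 T ∧ 2 * L * S y < r' := fun y hy =>
      have h := hsub ⟨hy.1, hy.2.trans_lt hz.2⟩
      ⟨⟨hx.1.trans hy.1, h.2.2.le⟩, h.1⟩
    have hzI := hI z ⟨hz.1.le, le_rfl⟩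
    have hle : S z ≤ S x + 2 * (r' / 2 * (z - x)) := by
      refine weighted_tsum_le_add_of_abs_sub_le (hbdd x hxI) (hbdd z hzI.1) fun k => ?_
      refine norm_image_sub_le_of_norm_deriv_le_segment' (f := fun s => a s k)
        (f' := fun s => a' s k) (fun y hy => (hderiv k y (hI y hy).1).hasDerivWithinAt)
        (fun y hy => ?_) z ⟨hz.1.le, le_rfl⟩
      have h := hI y ⟨hy.1, hy.2.le⟩
      have h2 : |a' y k| ≤ L * S y := hderivbdd y h.1 k
      rw [Real.norm_eq_abs]
      linarith [h.2]
    have hpos : 0 < z - x := sub_pos.2 hz.1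
    rw [inv_mul_lt_iff₀ hpos]
    nlinarith [mul_lt_mul_of_pos_right hr'r hpos]
end

section
/- Let L ≥ 0 and B ≥ 0. Let m : [0,1] → ℝ^ℕ with |m_k(t)| ≤ B for all t ∈ [0,1] and k ∈ ℕ, each component t ↦ m_k(t) differentiable on [0,1]. For each q ∈ ℕ let m̂^q : [0,1] → ℝ^ℕ satisfy: m̂^q_k(t) = 0 for all t whenever k > q; m̂^q_k(0) = m_k(0) for all k ≤ q; each component t ↦ m̂^q_k(t) is differentiable on [0,1] with |m̂^q_k(t)| ≤ B; and for every k ∈ ℕ and t ∈ [0,1], |(d/dt)(m̂^q_k(t) − m_k(t))| ≤ L · d_M(m̂^q(t), m(t)). Then sup_{t∈[0,1]} d_M(m̂^q(t), m(t)) → 0 as q → ∞. -/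
/-!
Write `e_k = m̂^q_k - m_k` and `D(t) = d_M(m̂^q(t), m(t))`, so that `|e_k'| ≤ L * D` for every `k`.
The estimate is a Grönwall argument in the weighted sup norm `S = sup_t exp(-4Lt) D(t)`, which is
finite because the moments are bounded. Since `D(t) ≤ S exp(4Lt)`, integrating the bound on `e_k'`
gives `|e_k(t)| ≤ |e_k(0)| + (S/4) exp(4Lt)`, and summing against `2^{-k}` (total mass `2`) gives
`D(t) ≤ (D(0) + S/2) exp(4Lt)` (`momentDist_le_step`). Hence `S ≤ D(0) + S/2`, that is
`D(t) ≤ 2 D(0) exp(4Lt)` (`momentDist_le_two_mul_exp`); neither continuity nor measurability of `D`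
is needed. Finally `D(0) → 0` as `q → ∞` by dominated convergence, each coordinate of the initial
error vanishing once `q ≥ k`.
-/

open MeasureTheory Filter

/-- The moment-space metric `d_M(m, m') = Σ_k 2^{-k} |m_k - m'_k|`. -/
noncomputable def momentDist (m m' : ℕ → ℝ) : ℝ :=
  ∑' k : ℕ, (2 : ℝ)⁻¹ ^ k * |m k - m' k|

lemma summable_momentDist {x y : ℕ → ℝ} {B : ℝ} (hx : ∀ k, |x k| ≤ B) (hy : ∀ k, |y k| ≤ B) :
    Summable fun k : ℕ => (2 : ℝ)⁻¹ ^ k * |x k - y k| := by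
  refine Summable.of_nonneg_of_le (fun k => by positivity) (fun k => ?_)
    ((summable_geometric_of_lt_one (by norm_num : (0 : ℝ) ≤ 2⁻¹) (by norm_num)).mul_right (2 * B))
  have h : |x k - y k| ≤ 2 * B := by
    have := abs_sub (x k) (y k)
    linarith [hx k, hy k]
  gcongr

lemma momentDist_nonneg (x y : ℕ → ℝ) : 0 ≤ momentDist x y :=
  tsum_nonneg fun k => by positivity

lemma tsum_two_inv_pow_mul (c : ℝ) : ∑' k : ℕ, (2 : ℝ)⁻¹ ^ k * c = 2 * c := by
  rw [tsum_mul_right, tsum_geometric_of_lt_one (by norm_num) (by norm_num)]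
  norm_num

lemma momentDist_le_of_bdd {x y : ℕ → ℝ} {B : ℝ} (hx : ∀ k, |x k| ≤ B) (hy : ∀ k, |y k| ≤ B) :
    momentDist x y ≤ 4 * B := by
  have hs := (summable_geometric_of_lt_one (by norm_num : (0 : ℝ) ≤ 2⁻¹)
    (by norm_num)).mul_right (2 * B)
  calc momentDist x y ≤ ∑' k : ℕ, (2 : ℝ)⁻¹ ^ k * (2 * B) := by
        refine (summable_momentDist hx hy).tsum_le_tsum (fun k => ?_) hs
        have h : |x k - y k| ≤ 2 * B := by
          have := abs_sub (x k) (y k)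
          linarith [hx k, hy k]
        gcongr
    _ = 4 * B := by rw [tsum_two_inv_pow_mul]; ring

/-- The self-improving step of the Grönwall argument: an exponential bound with constant `S` yields
one with constant `D(0) + S / 2`. The rate `4 * L` is what produces the factor `1 / 2`. -/
lemma momentDist_le_step {L B S : ℝ} (hL : 0 ≤ L) {x x' y y' : ℝ → ℕ → ℝ}
    (hx : ∀ t ∈ Set.Icc (0 : ℝ) 1, ∀ k, |x t k| ≤ B)
    (hy : ∀ t ∈ Set.Icc (0 : ℝ) 1, ∀ k, |y t k| ≤ B)
    (hx' : ∀ k, ∀ t ∈ Set.Icc (0 : ℝ) 1, HasDerivAt (fun s => x s k) (x' t k) t)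
    (hy' : ∀ k, ∀ t ∈ Set.Icc (0 : ℝ) 1, HasDerivAt (fun s => y s k) (y' t k) t)
    (hd : ∀ k, ∀ t ∈ Set.Icc (0 : ℝ) 1, |x' t k - y' t k| ≤ L * momentDist (x t) (y t))
    (hS0 : 0 ≤ S)
    (hS : ∀ t ∈ Set.Icc (0 : ℝ) 1, momentDist (x t) (y t) ≤ S * Real.exp (4 * L * t))
    {t : ℝ} (ht : t ∈ Set.Icc (0 : ℝ) 1) :
    momentDist (x t) (y t) ≤ (momentDist (x 0) (y 0) + S / 2) * Real.exp (4 * L * t) := by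
  have h0 : (0 : ℝ) ∈ Set.Icc (0 : ℝ) 1 := by simp
  have hcoord : ∀ k, |x t k - y t k| ≤ |x 0 k - y 0 k| + S / 4 * Real.exp (4 * L * t) := by
    intro k
    have hder : ∀ s ∈ Set.Icc (0 : ℝ) 1,
        HasDerivAt (fun s => x s k - y s k) (x' s k - y' s k) s :=
      fun s hs => (hx' k s hs).sub (hy' k s hs)
    have hbd : ∀ s : ℝ, HasDerivAt
        (fun s => |x 0 k - y 0 k| + S / 4 * Real.exp (4 * L * s))
        (L * (S * Real.exp (4 * L * s))) s := by
      intro s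
      have h := ((((hasDerivAt_id s).const_mul (4 * L)).exp).const_mul (S / 4)).const_add
        |x 0 k - y 0 k|
      refine h.congr_deriv ?_
      simp only [id]
      ring
    refine image_norm_le_of_norm_deriv_right_le_deriv_boundary
      (f := fun s => x s k - y s k) (f' := fun s => x' s k - y' s k)
      (fun s hs => (hder s hs).continuousAt.continuousWithinAt)
      (fun s hs => (hder s (Set.Ico_subset_Icc_self hs)).hasDerivWithinAt) ?_ hbd
      (fun s hs => ?_) ht
    · simp only [Real.norm_eq_abs]
      have : 0 ≤ S / 4 * Real.exp (4 * L * 0) := by positivity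
      linarith
    · have hs' := Set.Ico_subset_Icc_self hs
      exact (hd k s hs').trans (mul_le_mul_of_nonneg_left (hS s hs') hL)
  have hsum0 := summable_momentDist (hx 0 h0) (hy 0 h0)
  have hsumc := (summable_geometric_of_lt_one (by norm_num : (0 : ℝ) ≤ 2⁻¹)
    (by norm_num)).mul_right (S / 4 * Real.exp (4 * L * t))
  have hexp : 1 ≤ Real.exp (4 * L * t) :=
    Real.one_le_exp (mul_nonneg (by positivity) ht.1)
  calc momentDist (x t) (y t)
      ≤ ∑' k : ℕ, ((2 : ℝ)⁻¹ ^ k * |x 0 k - y 0 k|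
          + (2 : ℝ)⁻¹ ^ k * (S / 4 * Real.exp (4 * L * t))) := by
        refine (summable_momentDist (hx t ht) (hy t ht)).tsum_le_tsum (fun k => ?_)
          (hsum0.add hsumc)
        rw [← mul_add]
        exact mul_le_mul_of_nonneg_left (hcoord k) (by positivity)
    _ = momentDist (x 0) (y 0) + S / 2 * Real.exp (4 * L * t) := by
        rw [hsum0.tsum_add hsumc, tsum_two_inv_pow_mul, momentDist]
        ring
    _ ≤ (momentDist (x 0) (y 0) + S / 2) * Real.exp (4 * L * t) := by
        nlinarith [momentDist_nonneg (x 0) (y 0)]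

/-- Stability estimate: the distance of two bounded trajectories on `[0, 1]` is controlled by their
initial distance. -/
lemma momentDist_le_two_mul_exp {L B : ℝ} (hL : 0 ≤ L) {x x' y y' : ℝ → ℕ → ℝ}
    (hx : ∀ t ∈ Set.Icc (0 : ℝ) 1, ∀ k, |x t k| ≤ B)
    (hy : ∀ t ∈ Set.Icc (0 : ℝ) 1, ∀ k, |y t k| ≤ B)
    (hx' : ∀ k, ∀ t ∈ Set.Icc (0 : ℝ) 1, HasDerivAt (fun s => x s k) (x' t k) t)
    (hy' : ∀ k, ∀ t ∈ Set.Icc (0 : ℝ) 1, HasDerivAt (fun s => y s k) (y' t k) t)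
    (hd : ∀ k, ∀ t ∈ Set.Icc (0 : ℝ) 1, |x' t k - y' t k| ≤ L * momentDist (x t) (y t))
    {t : ℝ} (ht : t ∈ Set.Icc (0 : ℝ) 1) :
    momentDist (x t) (y t) ≤ 2 * momentDist (x 0) (y 0) * Real.exp (4 * L * t) := by
  let g : Set.Icc (0 : ℝ) 1 → ℝ := fun s => momentDist (x s) (y s) / Real.exp (4 * L * s)
  have hbdd : BddAbove (Set.range g) := by
    refine ⟨4 * B, ?_⟩
    rintro _ ⟨s, rfl⟩
    have hexp : 1 ≤ Real.exp (4 * L * s) :=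
      Real.one_le_exp (mul_nonneg (by positivity) s.2.1)
    exact (div_le_self (momentDist_nonneg _ _) hexp).trans
      (momentDist_le_of_bdd (hx s s.2) (hy s s.2))
  have hS0 : 0 ≤ ⨆ s, g s :=
    Real.iSup_nonneg fun s => div_nonneg (momentDist_nonneg _ _) (Real.exp_pos _).le
  have hS : ∀ s ∈ Set.Icc (0 : ℝ) 1,
      momentDist (x s) (y s) ≤ (⨆ s, g s) * Real.exp (4 * L * s) := fun s hs =>
    (div_le_iff₀ (Real.exp_pos _)).1 (le_ciSup hbdd ⟨s, hs⟩)
  have : Nonempty (Set.Icc (0 : ℝ) 1) := ⟨⟨t, ht⟩⟩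
  have hle : ⨆ s, g s ≤ momentDist (x 0) (y 0) + (⨆ s, g s) / 2 :=
    ciSup_le fun s => (div_le_iff₀ (Real.exp_pos _)).2
      (momentDist_le_step hL hx hy hx' hy' hd hS0 hS s.2)
  refine (hS t ht).trans ?_
  gcongr
  linarith

/-- uniform convergence of the truncated moment trajectories to the full
moment trajectory as the truncation order tends to infinity. -/
theorem truncated_moment_trajectories_tendsto_uniformly
    (L B : ℝ) (hL : 0 ≤ L) (hB : 0 ≤ B)
    (m m' : ℝ → ℕ → ℝ)
    (hmbdd : ∀ t ∈ Set.Icc (0 : ℝ) 1, ∀ k : ℕ, |m t k| ≤ B)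
    (hmderiv : ∀ k : ℕ, ∀ t ∈ Set.Icc (0 : ℝ) 1, HasDerivAt (fun s => m s k) (m' t k) t)
    (mhat : ℕ → ℝ → ℕ → ℝ) (mhat' : ℕ → ℝ → ℕ → ℝ)
    (htrunc : ∀ q k : ℕ, q < k → ∀ t ∈ Set.Icc (0 : ℝ) 1, mhat q t k = 0)
    (hinit : ∀ q k : ℕ, k ≤ q → mhat q 0 k = m 0 k)
    (hhatbdd : ∀ q : ℕ, ∀ t ∈ Set.Icc (0 : ℝ) 1, ∀ k : ℕ, |mhat q t k| ≤ B)
    (hhatderiv : ∀ q k : ℕ, ∀ t ∈ Set.Icc (0 : ℝ) 1,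
      HasDerivAt (fun s => mhat q s k) (mhat' q t k) t)
    (hdiffderiv : ∀ q k : ℕ, ∀ t ∈ Set.Icc (0 : ℝ) 1,
      |mhat' q t k - m' t k| ≤ L * momentDist (mhat q t) (m t)) :
    Tendsto (fun q : ℕ => ⨆ t : Set.Icc (0 : ℝ) 1, momentDist (mhat q ↑t) (m ↑t))
      atTop (nhds 0) := by
  have h0 : (0 : ℝ) ∈ Set.Icc (0 : ℝ) 1 := by simp
  have hinit0 : Tendsto (fun q => momentDist (mhat q 0) (m 0)) atTop (nhds 0) := by
    have h := tendsto_tsum_of_dominated_convergence (𝓕 := atTop)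
      (f := fun (q k : ℕ) => (2 : ℝ)⁻¹ ^ k * |mhat q 0 k - m 0 k|) (g := fun _ : ℕ => (0 : ℝ))
      (bound := fun k : ℕ => (2 : ℝ)⁻¹ ^ k * (2 * B))
      ((summable_geometric_of_lt_one (by norm_num) (by norm_num)).mul_right _)
      (fun k => tendsto_const_nhds.congr' (by
        filter_upwards [eventually_ge_atTop k] with q hq
        simp [hinit q k hq]))
      (Eventually.of_forall fun q k => by
        rw [Real.norm_of_nonneg (by positivity)]
        have h : |mhat q 0 k - m 0 k| ≤ 2 * B := by
          have := abs_sub (mhat q 0 k) (m 0 k)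
          linarith [hhatbdd q 0 h0 k, hmbdd 0 h0 k]
        gcongr)
    simpa [momentDist] using h
  have hlim : Tendsto (fun q => 2 * momentDist (mhat q 0) (m 0) * Real.exp (4 * L)) atTop
      (nhds 0) := by
    simpa using (hinit0.const_mul 2).mul_const (Real.exp (4 * L))
  refine squeeze_zero (fun q => Real.iSup_nonneg fun t => momentDist_nonneg _ _) (fun q => ?_) hlim
  have : Nonempty (Set.Icc (0 : ℝ) 1) := ⟨⟨0, h0⟩⟩
  refine ciSup_le fun t => (momentDist_le_two_mul_exp hL (hhatbdd q) hmbdd (hhatderiv q) hmderiv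
    (hdiffderiv q) t.2).trans ?_
  have hnn := momentDist_nonneg (mhat q 0) (m 0)
  have hexp : Real.exp (4 * L * t) ≤ Real.exp (4 * L) :=
    Real.exp_le_exp.2 (mul_le_of_le_one_right (by positivity) t.2.2)
  gcongr
end

section
/- Let p ≥ 1 be an integer, let u₁, …, u_p : ℝ → ℝ be continuous, and let x : ℝ × [0,1] → ℝ be continuous such that for every β ∈ [0,1] and t ∈ ℝ, the map t ↦ x(t, β) is differentiable with (∂/∂t) x(t, β) = β·x(t, β) + Σ_{i=1}^p β^{i−1}·u_i(t), and (t, β) ↦ (∂/∂t)x(t, β) is continuous. Define the moments m_k(t) = ∫_0^1 β^k x(t, β) dβ for k ∈ ℕ. Then for every k ∈ ℕ and every t ∈ ℝ, m_k is differentiable at t with derivative m_k'(t) = m_{k+1}(t) + Σ_{i=1}^p u_i(t)/(k + i). -/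
/-!
The moments are differentiated under the integral sign. The right-hand side of the ensemble
equation, multiplied by `β ^ k`, is jointly continuous in `(t, β)`, hence bounded on the compact
set `[t - 1, t + 1] × [0, 1]`, and that constant dominates the difference quotients. The derivative
is therefore `∫ β ^ k * (β * x + ∑ β ^ i * u i)`, which splits by linearity into the next moment and
the integrals `∫ β ^ (k + i) = 1 / (k + i + 1)`.
-/

open MeasureTheory

/-- moment dynamics of the multi-input scalar linear ensemble system
`dx/dt = βx + Σ_{i=1}^p β^{i-1} u_i(t)` on `β ∈ [0,1]`: the monomial moments
`m_k(t) = ∫_0^1 β^k x(t,β) dβ` satisfy `m_k' = m_{k+1} + Σ_{i=1}^p u_i/(k+i)`.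
Here `i : Fin p` encodes the input index `i + 1 ∈ {1, …, p}`. -/
theorem moment_dynamics_linear_ensemble
    (p : ℕ) (hp : 1 ≤ p) (u : Fin p → ℝ → ℝ) (hu : ∀ i, Continuous (u i))
    (x : ℝ → ℝ → ℝ)
    (hx : ContinuousOn (Function.uncurry x) (Set.univ ×ˢ Set.Icc (0 : ℝ) 1))
    (hxderiv : ∀ β ∈ Set.Icc (0 : ℝ) 1, ∀ t : ℝ,
      HasDerivAt (fun s => x s β)
        (β * x t β + ∑ i : Fin p, β ^ (i : ℕ) * u i t) t) :
    ∀ k : ℕ, ∀ t : ℝ,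
      HasDerivAt (fun s => ∫ β in Set.Icc (0 : ℝ) 1, β ^ k * x s β)
        ((∫ β in Set.Icc (0 : ℝ) 1, β ^ (k + 1) * x t β) +
          ∑ i : Fin p, u i t / ((k : ℝ) + (i : ℕ) + 1)) t := by
  intro k t
  set I := Set.Icc (0 : ℝ) 1 with hI
  let F' : ℝ → ℝ → ℝ := fun s β => β ^ k * (β * x s β + ∑ i : Fin p, β ^ (i : ℕ) * u i s)
  have hF'c : ContinuousOn (Function.uncurry F') (Set.univ ×ˢ I) := by
    refine ContinuousOn.mul (by fun_prop) (ContinuousOn.add (ContinuousOn.mul (by fun_prop) hx) ?_)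
    exact Continuous.continuousOn (by fun_prop)
  have slice : ∀ (g : ℝ → ℝ → ℝ) (s : ℝ),
      ContinuousOn (Function.uncurry g) (Set.univ ×ˢ I) → ContinuousOn (g s) I := by
    intro g s hg
    exact hg.comp (f := fun β : ℝ => (s, β)) (by fun_prop) (fun β hβ => ⟨trivial, hβ⟩)
  have hxs : ∀ s, ContinuousOn (x s) I := fun s => slice x s hx
  have hmom : ∀ (n : ℕ) (s : ℝ), IntegrableOn (fun β => β ^ n * x s β) I := fun n s =>
    (ContinuousOn.mul (by fun_prop) (hxs s)).integrableOn_compact isCompact_Icc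
  obtain ⟨C, hC⟩ := ((isCompact_Icc (a := t - 1) (b := t + 1)).prod
    (isCompact_Icc (a := (0 : ℝ)) (b := 1))).exists_bound_of_continuousOn
    (hF'c.mono (Set.prod_mono (Set.subset_univ _) subset_rfl))
  have key := (hasDerivAt_integral_of_dominated_loc_of_deriv_le
    (μ := volume.restrict I) (F := fun s β => β ^ k * x s β) (F' := F') (x₀ := t)
    (s := Set.Icc (t - 1) (t + 1)) (bound := fun _ => C)
    (Icc_mem_nhds (by linarith) (by linarith))
    (Filter.Eventually.of_forall fun s => (hmom k s).aestronglyMeasurable) (hmom k t)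
    ((slice F' t hF'c).aestronglyMeasurable measurableSet_Icc)
    ((ae_restrict_iff' measurableSet_Icc).2 (Filter.Eventually.of_forall
      fun β hβ s hs => hC (s, β) ⟨hs, hβ⟩))
    (integrable_const C)
    ((ae_restrict_iff' measurableSet_Icc).2 (Filter.Eventually.of_forall
      fun β hβ s _ => (hxderiv β hβ s).const_mul (β ^ k)))).2
  refine key.congr_deriv ?_
  have hsplit : F' t =
      fun β => β ^ (k + 1) * x t β + ∑ i : Fin p, β ^ (k + (i : ℕ)) * u i t := by
    funext β
    simp only [F', mul_add, Finset.mul_sum, pow_add, pow_one, mul_assoc]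
  have hpow : ∀ i : Fin p, IntegrableOn (fun β : ℝ => β ^ (k + (i : ℕ)) * u i t) I := fun i =>
    (Continuous.continuousOn (by fun_prop)).integrableOn_compact isCompact_Icc
  rw [hsplit, integral_add (hmom (k + 1) t) (integrable_finsetSum _ fun i _ => hpow i),
    integral_finsetSum _ fun i _ => hpow i]
  congr 1
  refine Finset.sum_congr rfl fun i _ => ?_
  rw [integral_mul_const, hI, integral_Icc_eq_integral_Ioc,
    ← intervalIntegral.integral_of_le zero_le_one, integral_pow]
  push_cast
  simp [div_eq_inv_mul]
end
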